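/- Let r ∈ ℝ, T > 0, p > 4, R > 0, and let σ : [0,∞)×ℝ → ℝ be measurable with |σ(x,u)| ≤ R(e^{rx}+|u|) for all x ≥ 0, u ∈ ℝ. Then there exists a constant C = C(r,p,T) > 0 such that for every continuous u : [0,T]×[0,∞) → ℝ with ‖u‖_{C_r^T} < ∞, sup_{t∈[0,T]} sup_{x≥0} ∫_0^t ∫_0^∞ G_r(t−s,x,y)² e^{−2ry} |σ(y,u(s,y))|² dy ds ≤ C^{2/p} R² T^{1/2} ( 1 + ‖u‖_{C_r^T} )². -/

import Mathlib

/-!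
The weight `e^{-2ry}` turns the linear growth of `σ` into the uniform bound
`e^{-2ry} |σ(y,u)|² ≤ R² (1 + ‖u‖)²`. Since `0 ≤ G(τ,x,y) ≤ (4πτ)^{-1/2} e^{-(x-y)²/(4τ)}` on the
half-line, completing the square shows that `G_r(τ,x,·)²` lies below a Gaussian of total mass
`(4πτ)^{-1} √(2πτ) e^{2r²τ} ≤ e^{2r²T} τ^{-1/2}` (`Gr_sq_le`, `inner_bound`). Integrating
`(t-s)^{-1/2}` over `[0,t]` gives `2√t ≤ 2√T`, so `C = (2 e^{2r²T})^{p/2}` works.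
-/

open MeasureTheory Real Set Filter

/-- Dirichlet heat kernel on `[0,∞)`. -/
noncomputable def G (t x y : ℝ) : ℝ :=
  (Real.sqrt (4 * Real.pi * t))⁻¹ *
    (Real.exp (-(x - y) ^ 2 / (4 * t)) - Real.exp (-(x + y) ^ 2 / (4 * t)))

/-- Exponentially weighted kernel `G_r(t,x,y) = e^{-r(x-y)} G(t,x,y)`. -/
noncomputable def Gr (r t x y : ℝ) : ℝ := Real.exp (-r * (x - y)) * G t x y

/-- Weighted sup norm `‖v‖_{L_r} = sup_{x ≥ 0} e^{-rx}|v(x)|`. -/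
noncomputable def LrNorm (r : ℝ) (v : ℝ → ℝ) : ℝ :=
  sSup ((fun x => Real.exp (-r * x) * |v x|) '' Ici 0)

/-- Weighted sup norm `‖u‖_{C_r^T} = sup_{t ∈ [0,T]} sup_{x ≥ 0} e^{-rx}|u(t,x)|`. -/
noncomputable def CrNorm (r T : ℝ) (u : ℝ → ℝ → ℝ) : ℝ :=
  sSup ((fun q : ℝ × ℝ => Real.exp (-r * q.2) * |u q.1 q.2|) '' (Icc 0 T ×ˢ Ici 0))

/-- `‖u‖_{C_r^T} < ∞`, expressed as boundedness of the weighted values. -/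
def CrBdd (r T : ℝ) (u : ℝ → ℝ → ℝ) : Prop :=
  BddAbove ((fun q : ℝ × ℝ => Real.exp (-r * q.2) * |u q.1 q.2|) '' (Icc 0 T ×ˢ Ici 0))

theorem Gr_sq_le (r τ x y : ℝ) (hτ : 0 < τ) (hx : 0 ≤ x) (hy : 0 ≤ y) :
    (Gr r τ x y) ^ 2 ≤ (4 * π * τ)⁻¹ * rexp (2 * r ^ 2 * τ) *
      rexp (-(1 / (2 * τ)) * (y - (x + 2 * r * τ)) ^ 2) := by
  have hG0 : 0 ≤ rexp (-(x - y) ^ 2 / (4 * τ)) - rexp (-(x + y) ^ 2 / (4 * τ)) := by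
    rw [sub_nonneg]
    apply Real.exp_le_exp.mpr
    refine div_le_div_of_nonneg_right ?_ (by positivity : (0:ℝ) ≤ 4 * τ)
    nlinarith [mul_nonneg hx hy]
  have hG1 : rexp (-(x - y) ^ 2 / (4 * τ)) - rexp (-(x + y) ^ 2 / (4 * τ))
      ≤ rexp (-(x - y) ^ 2 / (4 * τ)) := by
    linarith [Real.exp_pos (-(x + y) ^ 2 / (4 * τ))]
  have hsq := pow_le_pow_left₀ hG0 hG1 2
  have h1 : (Gr r τ x y) ^ 2 = (4 * π * τ)⁻¹ * (rexp (-r * (x - y)) ^ 2 *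
      (rexp (-(x - y) ^ 2 / (4 * τ)) - rexp (-(x + y) ^ 2 / (4 * τ))) ^ 2) := by
    unfold Gr G
    rw [mul_pow, mul_pow, inv_pow, Real.sq_sqrt (by positivity : 0 ≤ 4 * π * τ)]
    ring
  rw [h1, mul_assoc (4 * π * τ)⁻¹]
  refine mul_le_mul_of_nonneg_left ?_ (by positivity)
  refine (mul_le_mul_of_nonneg_left hsq (by positivity)).trans (le_of_eq ?_)
  rw [← Real.exp_nat_mul, ← Real.exp_nat_mul, ← Real.exp_add, ← Real.exp_add]
  congr 1
  push_cast
  field_simp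
  ring

/-- The spatial integral of the squared kernel against a function bounded by `M` has the
integrable time singularity `τ^{-1/2}`. At `τ = 0` both sides vanish by the conventions
`0⁻¹ = 0` and `0 ^ (-1/2) = 0`. -/
theorem inner_bound (r T τ x M : ℝ) (hτ : 0 ≤ τ) (hτT : τ ≤ T) (hx : 0 ≤ x) (hM : 0 ≤ M)
    (F : ℝ → ℝ) (hF0 : ∀ y > 0, 0 ≤ F y) (hF : ∀ y > 0, F y ≤ M) :
    ∫ y in Ioi (0:ℝ), (Gr r τ x y) ^ 2 * F y
      ≤ M * rexp (2 * r ^ 2 * T) * τ ^ (-(1/2) : ℝ) := by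
  rcases hτ.eq_or_lt with rfl | hτ
  · simp [Gr, G]
  set c := (4 * π * τ)⁻¹ * rexp (2 * r ^ 2 * τ) with hc
  have hc0 : 0 ≤ c := by positivity
  set g : ℝ → ℝ := fun y => M * c * rexp (-(1 / (2 * τ)) * (y - (x + 2 * r * τ)) ^ 2) with hg
  have hgi : Integrable g :=
    ((integrable_exp_neg_mul_sq (b := 1 / (2 * τ)) (by positivity)).comp_sub_right
      (x + 2 * r * τ)).const_mul (M * c)
  have hgint : ∫ y, g y = M * c * √(π / (1 / (2 * τ))) := by
    rw [hg, integral_const_mul,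
      integral_sub_right_eq_self (fun y => rexp (-(1 / (2 * τ)) * y ^ 2)), integral_gaussian]
  have h1 : ∫ y in Ioi (0:ℝ), (Gr r τ x y) ^ 2 * F y ≤ ∫ y in Ioi (0:ℝ), g y := by
    refine integral_mono_of_nonneg ?_ hgi.integrableOn ?_
    · filter_upwards [ae_restrict_mem measurableSet_Ioi] with y hy
      exact mul_nonneg (sq_nonneg _) (hF0 y hy)
    · filter_upwards [ae_restrict_mem measurableSet_Ioi] with y hy
      have := mul_le_mul (Gr_sq_le r τ x y hτ hx (le_of_lt hy)) (hF y hy) (hF0 y hy)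
        (by positivity)
      refine this.trans (le_of_eq ?_)
      simp only [hg, hc]
      ring
  have h2 : ∫ y in Ioi (0:ℝ), g y ≤ ∫ y, g y :=
    setIntegral_le_integral hgi (Eventually.of_forall fun y => by simp only [hg]; positivity)
  refine (h1.trans h2).trans ?_
  rw [hgint, hc]
  have hs : √τ * √τ = τ := Real.mul_self_sqrt hτ.le
  have hsp : 0 < √τ := Real.sqrt_pos.mpr hτ
  have h3 : √(π / (1 / (2 * τ))) ≤ 4 * π * √τ := by
    rw [Real.sqrt_le_left (by positivity), mul_pow, Real.sq_sqrt hτ.le, div_div_eq_mul_div]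
    have := Real.pi_gt_three
    have h4 : π * 2 ≤ (4 * π) ^ 2 := by nlinarith
    nlinarith
  have h5 : (4 * π * τ)⁻¹ * √(π / (1 / (2 * τ))) ≤ τ ^ (-(1/2) : ℝ) := by
    rw [Real.rpow_neg hτ.le, ← Real.sqrt_eq_rpow]
    refine (mul_le_mul_of_nonneg_left h3 (by positivity)).trans (le_of_eq ?_)
    have := Real.pi_pos
    field_simp
    nlinarith
  have h6 : rexp (2 * r ^ 2 * τ) ≤ rexp (2 * r ^ 2 * T) := by
    apply Real.exp_le_exp.mpr
    gcongr
  calc M * ((4 * π * τ)⁻¹ * rexp (2 * r ^ 2 * τ)) * √(π / (1 / (2 * τ)))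
      = M * rexp (2 * r ^ 2 * τ) * ((4 * π * τ)⁻¹ * √(π / (1 / (2 * τ)))) := by ring
    _ ≤ _ := by gcongr

theorem time_integral (t : ℝ) (ht : 0 ≤ t) :
    IntegrableOn (fun s => (t - s) ^ (-(1/2) : ℝ)) (Ioc 0 t) ∧
      ∫ s in Ioc 0 t, (t - s) ^ (-(1/2) : ℝ) = 2 * t ^ (1/2 : ℝ) := by
  constructor
  · have h := (intervalIntegral.intervalIntegrable_rpow' (a := 0) (b := t) (r := -(1/2))
      (by norm_num)).comp_sub_left t
    simp only [sub_zero, sub_self] at h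
    exact (intervalIntegrable_iff_integrableOn_Ioc_of_le ht).mp h.symm
  · rw [← intervalIntegral.integral_of_le ht,
      intervalIntegral.integral_comp_sub_left (fun s => s ^ (-(1/2) : ℝ)),
      integral_rpow (Or.inl (by norm_num))]
    norm_num
    ring

/-- as in (4.10) of the paper: weighted square-kernel bound for the diffusion term. -/
theorem stmt_13 (r T p : ℝ) (hT : 0 < T) (hp : 4 < p) :
    ∃ C > (0:ℝ), ∀ R : ℝ, 0 < R →
      ∀ σ : ℝ → ℝ → ℝ,
        Measurable (Function.uncurry σ) →
        (∀ x ≥ (0:ℝ), ∀ u : ℝ, |σ x u| ≤ R * (Real.exp (r * x) + |u|)) →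
      ∀ u : ℝ → ℝ → ℝ,
        ContinuousOn (Function.uncurry u) (Icc 0 T ×ˢ Ici 0) → CrBdd r T u →
        ∀ t ∈ Icc (0:ℝ) T, ∀ x ≥ (0:ℝ),
          (∫ s in Ioc (0:ℝ) t, ∫ y in Ioi (0:ℝ),
              (Gr r (t - s) x y) ^ 2 * Real.exp (-2 * r * y) * |σ y (u s y)| ^ 2)
            ≤ C ^ (2 / p) * R ^ 2 * T ^ ((1:ℝ) / 2) * (1 + CrNorm r T u) ^ 2 := by
  refine ⟨(2 * rexp (2 * r ^ 2 * T)) ^ (p / 2), by positivity, ?_⟩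
  intro R hR σ _ hσ u _ hu t ht x hx
  have hC : ((2 * rexp (2 * r ^ 2 * T)) ^ (p / 2)) ^ (2 / p) = 2 * rexp (2 * r ^ 2 * T) := by
    rw [← Real.rpow_mul (by positivity)]
    have : p / 2 * (2 / p) = 1 := by field_simp
    rw [this, Real.rpow_one]
  rw [hC]
  set N := CrNorm r T u with hN
  have hle : ∀ s ∈ Icc 0 T, ∀ y ≥ (0:ℝ), rexp (-r * y) * |u s y| ≤ N := fun s hs y hy =>
    le_csSup hu ⟨(s, y), ⟨hs, hy⟩, rfl⟩
  have hN0 : 0 ≤ N := le_trans (by positivity) (hle t ht x hx)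
  set M := R ^ 2 * (1 + N) ^ 2 with hM
  have hM0 : 0 ≤ M := by positivity
  have hF : ∀ s ∈ Icc 0 T, ∀ y > (0:ℝ), rexp (-2 * r * y) * |σ y (u s y)| ^ 2 ≤ M := by
    intro s hs y hy
    have h1 : rexp (-r * y) * |σ y (u s y)| ≤ R * (1 + N) := by
      calc rexp (-r * y) * |σ y (u s y)|
          ≤ rexp (-r * y) * (R * (rexp (r * y) + |u s y|)) := by
            gcongr
            exact hσ y hy.le _
        _ = R * (rexp (-r * y) * rexp (r * y) + rexp (-r * y) * |u s y|) := by ring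
        _ = R * (1 + rexp (-r * y) * |u s y|) := by
            rw [← Real.exp_add]
            simp
        _ ≤ _ := by
            gcongr
            exact hle s hs y hy.le
    have h2 : rexp (-2 * r * y) = rexp (-r * y) ^ 2 := by
      rw [← Real.exp_nat_mul]
      congr 1
      push_cast
      ring
    rw [h2, ← mul_pow, hM, ← mul_pow]
    exact pow_le_pow_left₀ (by positivity) h1 2
  obtain ⟨hti, hte⟩ := time_integral t ht.1
  calc _ ≤ ∫ s in Ioc (0:ℝ) t, M * rexp (2 * r ^ 2 * T) * (t - s) ^ (-(1/2) : ℝ) := by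
        refine integral_mono_of_nonneg ?_ (hti.const_mul _) ?_
        · exact Eventually.of_forall fun s => integral_nonneg fun y => by
            simp only [Pi.zero_apply]
            positivity
        · filter_upwards [ae_restrict_mem measurableSet_Ioc] with s hs
          simp only [mul_assoc (Gr r (t - s) x _ ^ 2)]
          exact inner_bound r T (t - s) x M (by linarith [hs.2]) (by linarith [hs.1, ht.2]) hx hM0
            _ (fun y _ => by positivity) (hF s ⟨hs.1.le, hs.2.trans ht.2⟩)
    _ = M * rexp (2 * r ^ 2 * T) * (2 * t ^ (1/2 : ℝ)) := by
        rw [integral_const_mul, hte]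
    _ ≤ M * rexp (2 * r ^ 2 * T) * (2 * T ^ (1/2 : ℝ)) := by
        have h0 := ht.1
        have h1 := ht.2
        gcongr
    _ = _ := by
        rw [hM]
        ring
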